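/- For every integer n ≥ 7, the number of Dyck paths D ∈ D̂_n with x_1(D) ∉ {y_2(D), y_2(D)+1} equals binom(n-5, 2)·M_{n-7}. -/

import Mathlib

/-- A Dyck path of semilength `n`, encoded as a word on `Bool`
(`true` = up step `u`, `false` = down step `d`). -/
def IsDyckWord (n : ℕ) (w : List Bool) : Prop :=
  w.length = 2 * n ∧ w.count true = n ∧ w.count false = n ∧
    ∀ p : List Bool, p <+: w → p.count false ≤ p.count true

/-- The (0-based) indices of the up steps of `w`. -/
def upIdxs (w : List Bool) : List ℕ := w.findIdxs (· == true)

/-- The (0-based) indices of the down steps of `w`. -/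
def downIdxs (w : List Bool) : List ℕ := w.findIdxs (· == false)

/-- `rStat w i` is the number of `d`'s strictly between the `i`-th and the
`(i+1)`-st `u` of `w` (with `i` 1-indexed). -/
def rStat (w : List Bool) (i : ℕ) : ℕ :=
  ((w.take ((upIdxs w).getD i 0)).drop ((upIdxs w).getD (i - 1) 0 + 1)).count false

/-- `sStat w i` is the number of `u`'s strictly between the `i`-th and the
`(i+1)`-st `d` of `w` (with `i` 1-indexed). -/
def sStat (w : List Bool) (i : ℕ) : ℕ :=
  ((w.take ((downIdxs w).getD i 0)).drop ((downIdxs w).getD (i - 1) 0 + 1)).count true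

/-- The statistic `L(D) = ∏_{i=1}^{n-1} C(r_i + s_i, r_i)` of a Dyck path of semilength `n`. -/
def LStat (n : ℕ) (w : List Bool) : ℕ :=
  ∏ i ∈ Finset.Icc 1 (n - 1), Nat.choose (rStat w i + sStat w i) (rStat w i)

/-- `dyckL n k` = the set `𝒟ₙᵏ` of Dyck paths of semilength `n` with `L(D) = k`. -/
def dyckL (n k : ℕ) : Set (List Bool) := {w | IsDyckWord n w ∧ LStat n w = k}

/-- A Motzkin path, encoded as a word on `Option Bool`
(`some true` = up, `some false` = down, `none` = horizontal). -/
def IsMotzkinWord (w : List (Option Bool)) : Prop :=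
  w.count (some false) = w.count (some true) ∧
    ∀ p : List (Option Bool), p <+: w → p.count (some false) ≤ p.count (some true)

/-- `motzkin n` = the `n`-th Motzkin number `Mₙ`, the number of Motzkin paths of length `n`. -/
noncomputable def motzkin (n : ℕ) : ℕ :=
  {w : List (Option Bool) | w.length = n ∧ IsMotzkinWord w}.ncard

/-- The Motzkin ballot number `T_{n,k}`: the number of Motzkin paths of length `n`
whose first down step is in position `k` (1-indexed); by convention `T_{k-1,k} = 1`,
counting the path of `k-1` horizontal steps. -/
noncomputable def motzkinBallot (n k : ℕ) : ℕ :=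
  if n + 1 = k then 1
  else
    {w : List (Option Bool) | w.length = n ∧ IsMotzkinWord w ∧
      w.getD (k - 1) none = some false ∧ ∀ j < k - 1, w.getD j none ≠ some false}.ncard

/-- Motzkin numbers with integer index: `Mᵢ = 0` for `i < 0`. -/
noncomputable def motzkinZ (i : ℤ) : ℤ := if 0 ≤ i then (motzkin i.toNat : ℤ) else 0

/-- Motzkin ballot numbers with integer first index: `T_{n,k} = 0` for `n < 0`. -/
noncomputable def motzkinBallotZ (n : ℤ) (k : ℕ) : ℤ :=
  if 0 ≤ n then (motzkinBallot n.toNat k : ℤ) else 0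

/-- The set of returns of a Dyck path `w` of semilength `n`:
indices `1 ≤ k ≤ n` such that the path touches the `x`-axis after `2k` steps. -/
def returns (n : ℕ) (w : List Bool) : Finset ℕ :=
  (Finset.Icc 1 n).filter fun k => (w.take (2 * k)).count false = (w.take (2 * k)).count true

/-- `dyckRS n r s` = the set `𝒟ₙ^{r,s}` of Dyck paths of semilength `n` having exactly one
index `i` with `rᵢ > 0` and `sᵢ > 0`, and such that at that index `rᵢ = r` and `sᵢ = s`. -/
def dyckRS (n r s : ℕ) : Set (List Bool) :=
  {w | IsDyckWord n w ∧ ∃ i ∈ Finset.Icc 1 (n - 1),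
    (0 < rStat w i ∧ 0 < sStat w i) ∧ rStat w i = r ∧ sStat w i = s ∧
      ∀ j ∈ Finset.Icc 1 (n - 1), 0 < rStat w j ∧ 0 < sStat w j → j = i}

/-- `twoStars n w k₁ k₂` says that `k₁ < k₂` are exactly the two indices `i` of `w`
with `rᵢ > 0` and `sᵢ > 0`. -/
def twoStars (n : ℕ) (w : List Bool) (k₁ k₂ : ℕ) : Prop :=
  k₁ ∈ Finset.Icc 1 (n - 1) ∧ k₂ ∈ Finset.Icc 1 (n - 1) ∧ k₁ < k₂ ∧
    (0 < rStat w k₁ ∧ 0 < sStat w k₁) ∧ (0 < rStat w k₂ ∧ 0 < sStat w k₂) ∧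
    ∀ j ∈ Finset.Icc 1 (n - 1), 0 < rStat w j ∧ 0 < sStat w j → j = k₁ ∨ j = k₂

/-- `xStat w k` = the number of indices `i < k` with `rᵢ = 0` and `sᵢ > 0`. -/
def xStat (w : List Bool) (k : ℕ) : ℕ :=
  ((Finset.Ico 1 k).filter fun i => rStat w i = 0 ∧ 0 < sStat w i).card

/-- `yStat w k` = the number of indices `i < k` with `rᵢ > 0` and `sᵢ = 0`. -/
def yStat (w : List Bool) (k : ℕ) : ℕ :=
  ((Finset.Ico 1 k).filter fun i => 0 < rStat w i ∧ sStat w i = 0).card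

/-- The generating function `m(x) = Σ Mₙ xⁿ` of the Motzkin numbers, over `ℚ`. -/
noncomputable def motzkinGF : PowerSeries ℚ := PowerSeries.mk fun n => (motzkin n : ℚ)

/-!
Mark every index `i` of a Dyck path by whether `sᵢ > 0` and whether `rᵢ > 0`. The marks determine
the path, and they form a path of Motzkin type in which a mark with `sᵢ > 0` only is an up step and
a mark with `rᵢ > 0` only is a down step. Having two distinguished indices, `𝒟̂ₙ` consists of
Motzkin words of length `n - 3` cut in two places. The values of `rᵢ` and `sᵢ` at a cut are
distances between consecutive marks elsewhere in the word, so `L = 4` demands that four such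
distances be `1`. Unless `x₁ ∈ {y₂, y₂ + 1}`, these are four distinct distances, each of which can
be forced to be `1` by doubling a letter. Doubling the four letters is a bijection from all cut
Motzkin words of length `n - 7`, and a word of length `n - 7` can be cut in `C(n - 5, 2)` ways.
-/

section Spacing

variable {α β : Type*}

/-- The distance between consecutive entries of a list that satisfy `p`. The entries satisfying
`p` are numbered from `1`, and virtual ones are placed just before the list (number `0`) and just
after it; `spacing p j l` is the distance from number `j` to number `j + 1`, and `0` when there is
no number `j + 1`. -/
def spacing (p : α → Bool) : ℕ → List α → ℕ
  | 0, [] => 1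
  | _ + 1, [] => 0
  | 0, x :: l => if p x then 1 else spacing p 0 l + 1
  | j + 1, x :: l => spacing p (if p x then j else j + 1) l

variable {p : α → Bool}

theorem spacing_map (f : β → α) (j : ℕ) (l : List β) :
    spacing p j (l.map f) = spacing (p ∘ f) j l := by
  induction l generalizing j with
  | nil => cases j <;> rfl
  | cons x l ih => cases j <;> simp [spacing, ih]

theorem spacing_pos_iff {j : ℕ} {l : List α} : 0 < spacing p j l ↔ j ≤ l.countP p := by
  induction l generalizing j with
  | nil => cases j <;> simp [spacing]
  | cons x l ih => cases j <;> by_cases hx : p x <;> simp [spacing, ih, hx]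

theorem spacing_append_cons_of_le {x : α} (hx : p x) {j : ℕ} {l : List α} (hj : j ≤ l.countP p)
    (m : List α) : spacing p j (l ++ x :: m) = spacing p j l := by
  induction l generalizing j with
  | nil => obtain rfl : j = 0 := by simpa using hj
           simp [spacing, hx]
  | cons y l ih =>
    cases j <;> by_cases hy : p y <;> simp_all [spacing]

theorem spacing_append_cons_add {x : α} (hx : p x) (j : ℕ) (l m : List α) :
    spacing p (l.countP p + 1 + j) (l ++ x :: m) = spacing p j m := by
  induction l with
  | nil => simp [spacing, hx, Nat.add_comm 1 j]
  | cons y l ih =>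
    have hsucc (k : ℕ) : k + 1 + 1 + j = k + 1 + j + 1 := by omega
    by_cases hy : p y
    · simpa [spacing, hy, hsucc] using ih
    · rw [List.countP_cons_of_neg hy, Nat.add_right_comm]
      rw [Nat.add_right_comm] at ih
      simpa [spacing, hy] using ih

theorem spacing_zero_of_countP_eq_zero {l : List α} (h : l.countP p = 0) :
    spacing p 0 l = l.length + 1 := by
  induction l with
  | nil => rfl
  | cons x l ih =>
    obtain ⟨hx, hl⟩ : ¬ p x ∧ l.countP p = 0 := by by_cases hx : p x <;> simp_all
    simp [spacing, hx, ih hl]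

theorem spacing_replicate {x : α} (hx : p x) {j n : ℕ} (hj : j ≤ n) :
    spacing p j (List.replicate n x) = 1 := by
  induction n generalizing j with
  | zero => obtain rfl : j = 0 := by omega
            rfl
  | succ n ih =>
    cases j with
    | zero => simp [List.replicate_succ, spacing, hx]
    | succ j => simpa [List.replicate_succ, spacing, hx] using ih (by omega)

end Spacing

section LetterGaps

variable {α : Type*} [BEq α] [LawfulBEq α] {c : α}

theorem exists_eq_append_cons_of_lt_count {i : ℕ} {l : List α} (h : i < l.count c) :
    ∃ A B, l = A ++ c :: B ∧ A.count c = i := by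
  induction l generalizing i with
  | nil => simp at h
  | cons x l ih =>
    by_cases hx : x = c
    · subst hx
      cases i with
      | zero => exact ⟨[], l, rfl, rfl⟩
      | succ i =>
        obtain ⟨A, B, rfl, hA⟩ := ih (i := i) (by simpa using h)
        exact ⟨x :: A, B, rfl, by simp [hA]⟩
    · obtain ⟨A, B, rfl, hA⟩ := ih (i := i) (by simpa [hx] using h)
      exact ⟨x :: A, B, rfl, by simp [hx, hA]⟩

theorem findIdxs_append_cons_getD_count (A B : List α) :
    ((A ++ c :: B).findIdxs (· == c)).getD (A.count c) 0 = A.length := by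
  rw [List.findIdxs_append, List.getD_append_right _ _ _ _ (by simp [List.count])]
  simp [List.count]

end LetterGaps

/-- The number of letters `!c` strictly between the `i`-th and the `(i + 1)`-st letter `c` of `w`:
the common form of `rStat` and `sStat`. -/
def letterGap (c : Bool) (w : List Bool) (i : ℕ) : ℕ :=
  ((w.take ((w.findIdxs (· == c)).getD i 0)).drop
    ((w.findIdxs (· == c)).getD (i - 1) 0 + 1)).count (!c)

theorem rStat_eq_letterGap (w : List Bool) (i : ℕ) : rStat w i = letterGap true w i := rfl

theorem sStat_eq_letterGap (w : List Bool) (i : ℕ) : sStat w i = letterGap false w i := rfl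

theorem letterGap_succ_add_one {c : Bool} {w : List Bool} {i : ℕ} (hi : i + 1 < w.count c) :
    letterGap c w (i + 1) + 1 = spacing (· == c) (i + 1) w := by
  obtain ⟨A, R, rfl, rfl⟩ := exists_eq_append_cons_of_lt_count (Nat.lt_of_succ_lt hi)
  obtain ⟨B, C, rfl, hB⟩ := exists_eq_append_cons_of_lt_count (c := c) (i := 0) (l := R)
    (by simpa [Nat.add_assoc] using hi)
  have hfst := findIdxs_append_cons_getD_count (c := c) A (B ++ c :: C)
  have hsnd := findIdxs_append_cons_getD_count (c := c) (A ++ c :: B) C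
  have hgap : letterGap c (A ++ c :: (B ++ c :: C)) (A.count c + 1) = B.count (!c) := by
    have htake : (A ++ c :: (B ++ c :: C)).take (A.length + (B.length + 1)) = A ++ c :: B := by
      rw [← List.cons_append, ← List.append_assoc]
      exact List.take_left' (by simp)
    rw [List.count_append, List.count_cons_self, hB, Nat.zero_add, List.append_assoc,
      List.cons_append, List.length_append, List.length_cons] at hsnd
    rw [letterGap, Nat.add_sub_cancel, hfst, hsnd, htake]
    simp
  have hlen : B.count (!c) = B.length := by
    have := B.count_not_add_count c
    omega
  calc
    letterGap c (A ++ c :: (B ++ c :: C)) (A.count c + 1) + 1 = B.length + 1 := by rw [hgap, hlen]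
    _ = spacing (· == c) 0 (B ++ c :: C) := by
      rw [spacing_append_cons_of_le (by simp) (Nat.zero_le _), spacing_zero_of_countP_eq_zero hB]
    _ = spacing (· == c) (A.count c + 1) (A ++ c :: (B ++ c :: C)) :=
      (spacing_append_cons_add (by simp) 0 A _).symm

section Ballot

variable {α β : Type*} [BEq α] {u d : α} {h : ℤ}

/-- A word read as a lattice path with up steps `u`, down steps `d` and all other letters
horizontal, started at height `h`, satisfies `IsBallot u d h` when it never goes below height `0`.
-/
def IsBallot (u d : α) (h : ℤ) (w : List α) : Prop :=
  ∀ v, v <+: w → (v.count d : ℤ) ≤ h + v.count u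

/-- A path from height `0` to height `0` that never goes below `0`: the common form of Dyck and
Motzkin words. -/
def IsExcursion (u d : α) (w : List α) : Prop :=
  w.count d = w.count u ∧ IsBallot u d 0 w

theorem isBallot_nil : IsBallot u d h [] ↔ 0 ≤ h := by
  simp [IsBallot]

theorem isBallot_cons {x : α} {w : List α} :
    IsBallot u d h (x :: w) ↔
      0 ≤ h ∧ IsBallot u d (h + (if x == u then 1 else 0) - if x == d then 1 else 0) w := by
  simp only [IsBallot, List.prefix_cons_iff, forall_eq_or_imp, forall_exists_index, and_imp,
    List.count_nil, Nat.cast_zero, add_zero, and_congr_right_iff]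
  refine fun _ => ⟨fun H v hv => ?_, fun H _ v hvw hv => ?_⟩
  · have := H _ v rfl hv
    simp only [List.count_cons] at this
    split_ifs at this ⊢ <;> push_cast at this <;> omega
  · have := H v hv
    subst hvw
    simp only [List.count_cons]
    split_ifs at this ⊢ <;> push_cast <;> omega

theorem IsBallot.nonneg {w : List α} (hw : IsBallot u d h w) : 0 ≤ h := by
  simpa using hw [] List.nil_prefix

theorem isBallot_append {v w : List α} :
    IsBallot u d h (v ++ w) ↔
      IsBallot u d h v ∧ IsBallot u d (h + v.count u - v.count d) w := by
  induction v generalizing h with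
  | nil => simpa [isBallot_nil] using IsBallot.nonneg
  | cons x v ih =>
    have hheight : h + (if x == u then 1 else 0) - (if x == d then 1 else 0) + v.count u - v.count d
        = h + (x :: v).count u - (x :: v).count d := by
      simp only [List.count_cons]
      split_ifs <;> push_cast <;> ring
    rw [List.cons_append, isBallot_cons, isBallot_cons, ih, hheight, and_assoc]

theorem isBallot_of_count_le {w : List α} (hw : (w.count d : ℤ) ≤ h) : IsBallot u d h w := by
  intro v hv
  have := hv.sublist.count_le d
  omega

theorem isBallot_iff_take {w : List α} :
    IsBallot u d h w ↔ ∀ i, ((w.take i).count d : ℤ) ≤ h + (w.take i).count u := by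
  refine ⟨fun H i => H _ (List.take_prefix i w), fun H v hv => ?_⟩
  rw [List.prefix_iff_eq_take.mp hv]
  exact H _

variable [LawfulBEq α]

theorem isBallot_cons_up (hud : u ≠ d) {w : List α} :
    IsBallot u d h (u :: w) ↔ 0 ≤ h ∧ IsBallot u d (h + 1) w := by
  simp [isBallot_cons, hud]

theorem isBallot_cons_down (hud : u ≠ d) {w : List α} :
    IsBallot u d h (d :: w) ↔ IsBallot u d (h - 1) w := by
  rw [isBallot_cons, beq_eq_false_iff_ne.mpr hud.symm, beq_self_eq_true, if_neg Bool.false_ne_true,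
    if_pos rfl, add_zero, and_iff_right_iff_imp]
  intro hw
  linarith [hw.nonneg]

theorem isBallot_map [BEq β] [LawfulBEq β] {f : α → β} (hf : f.Injective) {w : List α} :
    IsBallot (f u) (f d) h (w.map f) ↔ IsBallot u d h w := by
  simp only [isBallot_iff_take, ← List.map_take, List.count_map_of_injective _ f hf]

end Ballot

theorem isDyckWord_iff {n : ℕ} {w : List Bool} :
    IsDyckWord n w ↔ w.length = 2 * n ∧ IsExcursion true false w := by
  have hlen := w.count_true_add_count_false
  simp only [IsDyckWord, IsExcursion, IsBallot, zero_add, Nat.cast_le, ← and_assoc]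
  refine and_congr_left fun _ => ⟨?_, ?_⟩ <;> omega

theorem exists_eq_true_cons_append_false {n : ℕ} {w : List Bool} (hw : IsDyckWord (n + 1) w) :
    ∃ u, w = true :: (u ++ [false]) := by
  obtain ⟨-, htrue, hfalse, hballot⟩ := hw
  obtain ⟨x, w, rfl⟩ := List.exists_cons_of_ne_nil (l := w) (by rintro rfl; simp at htrue)
  obtain rfl : x = true := by
    have := hballot [x] (List.prefix_append [x] w)
    cases x <;> simp_all
  obtain ⟨u, y, rfl⟩ := (List.eq_nil_or_concat' w).resolve_left (by rintro rfl; simp at hfalse)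
  obtain rfl : y = false := by
    have := hballot (true :: u) ⟨[y], rfl⟩
    cases y <;> simp_all
  exact ⟨u, rfl⟩

theorem isMotzkinWord_iff {w : List (Option Bool)} :
    IsMotzkinWord w ↔ IsExcursion (some true) (some false) w := by
  simp only [IsMotzkinWord, IsExcursion, IsBallot, zero_add, Nat.cast_le]

section Zigzag

variable {α : Type*}

/-- The word in two letters that starts with its first `c` and whose letters are prescribed by
marks: `a` holds one mark for every `c` but the last, telling whether some `d` separates it from
the next `c`, and `b` does the same for the letter `d`. Reading a word off its marks alternates
between the two letters, which is why the recursion swaps them at every mark that is set. -/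
def zigzag (c d : α) : List Bool → List Bool → List α
  | [], b => c :: List.replicate (b.length + 1) d
  | false :: a, b => c :: zigzag c d a b
  | true :: a, b => c :: zigzag d c b a
termination_by a b => a.length + b.length

theorem exists_zigzag_eq {c d : α} {w : List α} (hw : ∀ x ∈ w, x = c ∨ x = d) (hcd : c ≠ d)
    (hd : d ∈ w) :
    ∃ a b, zigzag c d a b = c :: w ∧
      (w.getLast? = some d → a.countP id = b.countP id) ∧
      (w.getLast? = some c → a.countP id = b.countP id + 1) := by
  induction w generalizing c d with
  | nil => simp at hd
  | cons x w ih =>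
    obtain ⟨rfl | rfl, hw⟩ := List.forall_mem_cons.mp hw
    · have hdw : d ∈ w := (List.mem_cons.mp hd).resolve_left hcd.symm
      obtain ⟨a, b, hab, hlast⟩ := ih hw hcd hdw
      refine ⟨false :: a, b, by rw [zigzag, hab], ?_⟩
      simpa [List.getLast?_cons_of_ne_nil (List.ne_nil_of_mem hdw)] using hlast
    by_cases hcw : c ∈ w
    · obtain ⟨b, a, hba, hlast, hlast'⟩ := ih (fun y hy => (hw y hy).symm) hcd.symm hcw
      refine ⟨true :: a, b, by rw [zigzag, hba], ?_⟩
      simpa [List.getLast?_cons_of_ne_nil (List.ne_nil_of_mem hcw), eq_comm]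
        using ⟨hlast', hlast⟩
    · obtain ⟨n, rfl⟩ : ∃ n, w = List.replicate n x := ⟨w.length, List.eq_replicate_of_mem
        fun y hy => (hw y hy).resolve_left fun h => hcw (h ▸ hy)⟩
      refine ⟨[], List.replicate n false, by simp [zigzag, List.replicate_succ], ?_⟩
      rw [← List.replicate_succ, List.getLast?_replicate]
      simp [List.countP_replicate, hcd.symm]

variable [BEq α] [LawfulBEq α] {c d : α}

theorem count_zigzag (hcd : c ≠ d) (a b : List Bool) :
    (zigzag c d a b).count c = a.length + 1 ∧ (zigzag c d a b).count d = b.length + 1 := by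
  induction c, d, a, b using zigzag.induct with
  | case1 c d b => simp [zigzag, hcd, hcd.symm, List.count_replicate]
  | case2 c d a b ih => simp [zigzag, hcd, ih hcd]
  | case3 c d a b ih => simp [zigzag, hcd, ih hcd.symm]

theorem spacing_zero_zigzag (a b : List Bool) : spacing (· == c) 0 (zigzag c d a b) = 1 := by
  unfold zigzag
  split <;> simp [spacing]

theorem spacing_zigzag (hcd : c ≠ d) {a b : List Bool} (hba : b.countP id ≤ a.countP id)
    (hab : a.countP id ≤ b.countP id + 1) :
    (∀ i < a.length, spacing (· == c) (i + 1) (zigzag c d a b) =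
        (if a[i]? = some true then spacing id ((a.take i).countP id) b else 0) + 1) ∧
      spacing (· == d) 0 (zigzag c d a b) = spacing id 0 a + 1 ∧
      ∀ i < b.length, spacing (· == d) (i + 1) (zigzag c d a b) =
        (if b[i]? = some true then spacing id ((b.take i).countP id + 1) a else 0) + 1 := by
  induction c, d, a, b using zigzag.induct with
  | case1 c d b =>
    have hb : ∀ i, b[i]? ≠ some true := fun i hi => by
      have := List.countP_pos_iff (p := id).mpr ⟨true, List.mem_of_getElem? hi, rfl⟩
      simp only [List.countP_nil, nonpos_iff_eq_zero] at hba
      omega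
    simp only [zigzag, spacing, beq_self_eq_true, beq_eq_false_iff_ne.mpr hcd, hb, if_false]
    simp +contextual [spacing_replicate, Nat.le_of_lt]
  | case2 c d a b ih =>
    obtain ⟨ihc, ihd, ihd'⟩ := ih hcd (by simpa using hba) (by simpa using hab)
    refine ⟨?_, ?_, ?_⟩
    · rintro (_ | i) hi
      · simp [zigzag, spacing, spacing_zero_zigzag]
      · simpa [zigzag, spacing] using ihc i (by simpa using hi)
    · simpa [zigzag, spacing, hcd] using ihd
    · simpa [zigzag, spacing, hcd] using ihd'
  | case3 c d a b ih =>
    obtain ⟨ihd, ihc, ihc'⟩ := ih hcd.symm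
      (Nat.le_of_succ_le_succ (by simpa using hab)) (by simpa using hba)
    refine ⟨?_, ?_, ?_⟩
    · rintro (_ | i) hi
      · simpa [zigzag, spacing] using ihc
      · simpa [zigzag, spacing] using ihc' i (by simpa using hi)
    · simp [zigzag, spacing, hcd, spacing_zero_zigzag]
    · simpa [zigzag, spacing, hcd] using ihd

theorem isBallot_zigzag (hcd : c ≠ d) (a b : List Bool) :
    (∀ t : ℕ, a.length + t = b.length → a.countP id = b.countP id →
      (IsBallot c d t (zigzag c d a b) ↔
        ∀ i, (a.take i).countP id ≤ (b.take (i + t)).countP id)) ∧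
    ∀ t : ℕ, b.length + t = a.length → a.countP id = b.countP id + 1 →
      (IsBallot d c t (zigzag c d a b) ↔
        ∀ i, (b.take i).countP id + 1 ≤ (a.take (i + t)).countP id) := by
  induction c, d, a, b using zigzag.induct with
  | case1 c d b =>
    refine ⟨fun t ht _ => ?_, fun t _ h => by simp at h⟩
    have : IsBallot c d (t + 1) (List.replicate (b.length + 1) d) :=
      isBallot_of_count_le (by rw [List.count_replicate_self, ← ht]; simp)
    simpa [zigzag, isBallot_cons_up hcd] using this
  | case2 c d a b ih =>
    refine ⟨fun t ht h => ?_, fun t ht h => ?_⟩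
    · rw [zigzag, isBallot_cons_up hcd, ← Nat.cast_succ,
        (ih hcd).1 (t + 1) (by rw [List.length_cons] at ht; omega) (by simpa using h),
        ← Nat.and_forall_add_one (p := fun i => ((false :: a).take i).countP id ≤ _)]
      simp [Nat.add_assoc, Nat.add_comm 1]
    · rw [zigzag, isBallot_cons_down hcd.symm]
      cases t with
      | zero => exact iff_of_false (fun H => by simpa using H.nonneg) fun H => by simpa using H 0
      | succ t =>
        rw [Nat.cast_succ, add_sub_cancel_right,
          (ih hcd).2 t (by rw [List.length_cons] at ht; omega) (by simpa using h)]
        simp [← Nat.add_assoc]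
  | case3 c d a b ih =>
    refine ⟨fun t ht h => ?_, fun t ht h => ?_⟩
    · rw [zigzag, isBallot_cons_up hcd, ← Nat.cast_succ,
        (ih hcd.symm).2 (t + 1) (by rw [List.length_cons] at ht; omega) (by simpa using h.symm),
        ← Nat.and_forall_add_one (p := fun i => ((true :: a).take i).countP id ≤ _)]
      simp [Nat.add_assoc, Nat.add_comm 1]
    · rw [zigzag, isBallot_cons_down hcd.symm]
      cases t with
      | zero => exact iff_of_false (fun H => by simpa using H.nonneg) fun H => by simpa using H 0
      | succ t =>
        rw [Nat.cast_succ, add_sub_cancel_right,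
          (ih hcd.symm).1 t (by rw [List.length_cons] at ht; omega) (by simpa using h.symm)]
        simp [← Nat.add_assoc]

end Zigzag

section PathOf

/-- The word whose marks are listed in `V`: for a Dyck word, the `i`-th entry of `V` tells whether
`sᵢ > 0` (first component) and whether `rᵢ > 0` (second component). -/
def pathOf (V : List (Bool × Bool)) : List Bool :=
  zigzag true false (V.map Prod.snd) (V.map Prod.fst)

/-- The marks of a Dyck word form an excursion in this sense: `(true, false)` is an up step,
`(false, true)` a down step, and the other two pairs are horizontal. -/
abbrev IsMarkExcursion (V : List (Bool × Bool)) : Prop := IsExcursion (true, false) (false, true) V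

theorem countP_fst (V : List (Bool × Bool)) :
    V.countP Prod.fst = V.count (true, true) + V.count (true, false) := by
  induction V with
  | nil => rfl
  | cons v V ih =>
    rw [List.countP_cons, List.count_cons, List.count_cons, ih]
    rcases v with ⟨_ | _, _ | _⟩ <;> simp <;> omega

theorem countP_snd (V : List (Bool × Bool)) :
    V.countP Prod.snd = V.count (true, true) + V.count (false, true) := by
  induction V with
  | nil => rfl
  | cons v V ih =>
    rw [List.countP_cons, List.count_cons, List.count_cons, ih]
    rcases v with ⟨_ | _, _ | _⟩ <;> simp <;> omega

variable {V : List (Bool × Bool)}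

theorem countP_id_map {α : Type*} (f : α → Bool) (l : List α) :
    (l.map f).countP id = l.countP f := List.countP_map

theorem countP_fst_eq_countP_snd_iff :
    V.countP Prod.fst = V.countP Prod.snd ↔ V.count (false, true) = V.count (true, false) := by
  rw [countP_fst, countP_snd]
  omega

theorem count_pathOf (c : Bool) : (pathOf V).count c = V.length + 1 := by
  have hcount := count_zigzag (c := true) (d := false) (by decide) (V.map Prod.snd) (V.map Prod.fst)
  cases c <;> simp [pathOf, hcount]

theorem isDyckWord_pathOf_iff (hV : V.countP Prod.fst = V.countP Prod.snd) :
    IsDyckWord (V.length + 1) (pathOf V) ↔ IsMarkExcursion V := by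
  have hlen : (pathOf V).length = 2 * (V.length + 1) := by
    rw [← List.count_true_add_count_false, count_pathOf, count_pathOf, two_mul]
  have hballot := (isBallot_zigzag (c := true) (d := false) (by decide) (V.map Prod.snd)
    (V.map Prod.fst)).1 0 (by simp) (by simpa only [countP_id_map] using hV.symm)
  rw [Nat.cast_zero] at hballot
  rw [isDyckWord_iff, IsExcursion, IsMarkExcursion, IsExcursion, hlen, count_pathOf, count_pathOf,
    pathOf, hballot, isBallot_iff_take, countP_fst_eq_countP_snd_iff.mp hV]
  simp only [true_and]
  refine forall_congr' fun i => ?_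
  rw [← List.map_take, ← List.map_take, countP_id_map, countP_id_map, countP_fst, countP_snd,
    Nat.add_zero]
  omega

theorem exists_pathOf_eq {n : ℕ} {w : List Bool} (hw : IsDyckWord (n + 1) w) :
    ∃ V, V.length = n ∧ IsMarkExcursion V ∧ pathOf V = w := by
  obtain ⟨u, rfl⟩ := exists_eq_true_cons_append_false hw
  obtain ⟨-, htrue, hfalse, -⟩ := id hw
  obtain ⟨a, b, hab, hlast, -⟩ := exists_zigzag_eq (w := u ++ [false]) (c := true) (d := false)
    (by simp) (by decide) (by simp)
  obtain ⟨ha, hb⟩ := count_zigzag (c := true) (d := false) (by decide) a b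
  rw [hab, htrue] at ha
  rw [hab, hfalse] at hb
  have hfst : (b.zip a).map Prod.fst = b := List.map_fst_zip (by omega)
  have hsnd : (b.zip a).map Prod.snd = a := List.map_snd_zip (by omega)
  have hpath : pathOf (b.zip a) = true :: (u ++ [false]) := by rw [pathOf, hfst, hsnd, hab]
  have hlen : (b.zip a).length = n := by rw [List.length_zip]; omega
  refine ⟨b.zip a, hlen, (isDyckWord_pathOf_iff ?_).mp (by rwa [hpath, hlen]), hpath⟩
  rw [← countP_id_map, ← countP_id_map Prod.snd, hfst, hsnd, hlast (by simp)]

theorem rStat_pathOf (hV : V.countP Prod.fst = V.countP Prod.snd) {i : ℕ} (hi : i < V.length) :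
    rStat (pathOf V) (i + 1) =
      if V[i].2 then spacing Prod.fst ((V.take i).countP Prod.snd) V else 0 := by
  have hgap := letterGap_succ_add_one (c := true) (w := pathOf V) (i := i)
    (by rw [count_pathOf]; omega)
  have hspacing := (spacing_zigzag (c := true) (d := false) (by decide) (a := V.map Prod.snd)
    (b := V.map Prod.fst) (by simp [hV]) (by simp [hV])).1 i (by simpa)
  rw [rStat_eq_letterGap, ← Nat.add_right_cancel_iff (n := 1), hgap, pathOf, hspacing]
  simp [hi, ← List.map_take, spacing_map]

theorem sStat_pathOf (hV : V.countP Prod.fst = V.countP Prod.snd) {i : ℕ} (hi : i < V.length) :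
    sStat (pathOf V) (i + 1) =
      if V[i].1 then spacing Prod.snd ((V.take i).countP Prod.fst + 1) V else 0 := by
  have hgap := letterGap_succ_add_one (c := false) (w := pathOf V) (i := i)
    (by rw [count_pathOf]; omega)
  have hspacing := (spacing_zigzag (c := true) (d := false) (by decide) (a := V.map Prod.snd)
    (b := V.map Prod.fst) (by simp [hV]) (by simp [hV])).2.2 i (by simpa)
  rw [sStat_eq_letterGap, ← Nat.add_right_cancel_iff (n := 1), hgap, pathOf, hspacing]
  simp [hi, ← List.map_take, spacing_map]

theorem rStat_pathOf_pos_iff (hV : V.countP Prod.fst = V.countP Prod.snd) {i : ℕ}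
    (hi : i < V.length) : 0 < rStat (pathOf V) (i + 1) ↔ V[i].2 := by
  have hpos : 0 < spacing Prod.fst ((V.take i).countP Prod.snd) V := by
    rw [spacing_pos_iff, hV]
    exact (V.take_sublist i).countP_le
  rw [rStat_pathOf hV hi]
  split_ifs <;> simp_all

theorem sStat_pathOf_pos_iff (hV : V.countP Prod.fst = V.countP Prod.snd) {i : ℕ}
    (hi : i < V.length) : 0 < sStat (pathOf V) (i + 1) ↔ V[i].1 := by
  rw [sStat_pathOf hV hi]
  split_ifs with hv
  · have hpos : 0 < spacing Prod.snd ((V.take i).countP Prod.fst + 1) V := by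
      have := (V.take_sublist (i + 1)).countP_le (p := Prod.fst)
      rw [List.take_succ_eq_append_getElem hi, List.countP_append, List.countP_singleton,
        if_pos hv] at this
      rwa [spacing_pos_iff, ← hV]
    simpa [hv] using hpos
  · simpa using hv

theorem pathOf_inj {W : List (Bool × Bool)} (hV : V.countP Prod.fst = V.countP Prod.snd)
    (hW : W.countP Prod.fst = W.countP Prod.snd) (h : pathOf V = pathOf W) : V = W := by
  have hlen : V.length = W.length := by
    rw [← Nat.add_right_cancel_iff (n := 1), ← count_pathOf true, ← count_pathOf true, h]
  refine List.ext_getElem hlen fun i hi hi' => Prod.ext ?_ ?_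
  · rw [Bool.eq_iff_iff, ← sStat_pathOf_pos_iff hV hi, h, sStat_pathOf_pos_iff hW hi']
  · rw [Bool.eq_iff_iff, ← rStat_pathOf_pos_iff hV hi, h, rStat_pathOf_pos_iff hW hi']

end PathOf

section CutWord

/-- A word in Motzkin steps cut into three pieces. -/
@[ext]
structure CutWord where
  /-- The piece before both cuts. -/
  left : List (Option Bool)
  /-- The piece between the cuts. -/
  middle : List (Option Bool)
  /-- The piece after both cuts. -/
  right : List (Option Bool)

namespace CutWord

/-- The word that has been cut. -/
def join (T : CutWord) : List (Option Bool) := T.left ++ (T.middle ++ T.right)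

/-- The number of up steps before the first cut: the statistic `x₁` of the Dyck path of `T`. -/
def x₁ (T : CutWord) : ℕ := T.left.count (some true)

/-- The number of down steps before the first cut: the statistic `y₁`. -/
def y₁ (T : CutWord) : ℕ := T.left.count (some false)

/-- The number of up steps before the second cut: the statistic `x₂`. -/
def x₂ (T : CutWord) : ℕ := T.x₁ + T.middle.count (some true)

/-- The number of down steps before the second cut: the statistic `y₂`. -/
def y₂ (T : CutWord) : ℕ := T.y₁ + T.middle.count (some false)

end CutWord

/-- The pair of marks that a Motzkin step stands for. -/
def stepMarks (o : Option Bool) : Bool × Bool := (o == some true, o == some false)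

theorem stepMarks_injective : stepMarks.Injective := by decide

theorem range_stepMarks : Set.range stepMarks = {(true, true)}ᶜ := by
  ext ⟨a, b⟩
  simp only [Set.mem_range, Set.mem_compl_iff, Set.mem_singleton_iff]
  revert a b
  decide

theorem count_up_map_stepMarks (l : List (Option Bool)) :
    (l.map stepMarks).count (true, false) = l.count (some true) :=
  List.count_map_of_injective l stepMarks stepMarks_injective (some true)

theorem count_down_map_stepMarks (l : List (Option Bool)) :
    (l.map stepMarks).count (false, true) = l.count (some false) :=
  List.count_map_of_injective l stepMarks stepMarks_injective (some false)

theorem countP_fst_map_stepMarks (l : List (Option Bool)) :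
    (l.map stepMarks).countP Prod.fst = l.count (some true) := List.countP_map

theorem countP_snd_map_stepMarks (l : List (Option Bool)) :
    (l.map stepMarks).countP Prod.snd = l.count (some false) := List.countP_map

theorem spacing_fst_map_stepMarks (j : ℕ) (l : List (Option Bool)) :
    spacing Prod.fst j (l.map stepMarks) = spacing (· == some true) j l := spacing_map _ _ _

theorem spacing_snd_map_stepMarks (j : ℕ) (l : List (Option Bool)) :
    spacing Prod.snd j (l.map stepMarks) = spacing (· == some false) j l := spacing_map _ _ _

theorem star_notMem_map_stepMarks (l : List (Option Bool)) : (true, true) ∉ l.map stepMarks := by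
  intro h
  obtain ⟨o, -, ho⟩ := List.mem_map.mp h
  exact range_stepMarks.subset ⟨o, rfl⟩ ho

theorem exists_map_stepMarks_eq {V : List (Bool × Bool)} (hV : (true, true) ∉ V) :
    ∃ l : List (Option Bool), l.map stepMarks = V := by
  change V ∈ Set.range (List.map stepMarks)
  rw [Set.range_list_map, range_stepMarks]
  exact fun v hv => ne_of_mem_of_not_mem hv hV

/-- The marks of a Dyck word in `𝒟̂ₙ`: a pair `(true, true)` at either cut of `T`, and no others. -/
def starWord (T : CutWord) : List (Bool × Bool) :=
  T.left.map stepMarks ++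
    (true, true) :: (T.middle.map stepMarks ++ (true, true) :: T.right.map stepMarks)

theorem length_starWord (T : CutWord) : (starWord T).length = T.join.length + 2 := by
  simp only [starWord, CutWord.join, List.length_append, List.length_map, List.length_cons]
  omega

theorem take_left_length_starWord (T : CutWord) :
    (starWord T).take T.left.length = T.left.map stepMarks :=
  List.take_left' (List.length_map _)

theorem take_middle_length_starWord (T : CutWord) :
    (starWord T).take (T.left.length + (T.middle.length + 1)) =
      T.left.map stepMarks ++ (true, true) :: T.middle.map stepMarks := by
  rw [starWord, ← List.cons_append, ← List.append_assoc]
  exact List.take_left' (by simp)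

theorem append_cons_inj_of_notMem_left {α : Type*} [BEq α] [LawfulBEq α] {x : α}
    {l l' m m' : List α} (hl : x ∉ l) (hl' : x ∉ l') (h : l ++ x :: m = l' ++ x :: m') :
    l = l' ∧ m = m' := by
  have hlen : l.length = l'.length := by
    simpa [List.idxOf_append_of_notMem, hl, hl'] using congrArg (List.idxOf x) h
  simpa using List.append_inj h hlen

theorem starWord_injective : starWord.Injective := by
  intro T T' h
  have hinj := List.map_injective_iff.mpr stepMarks_injective
  have hstar := star_notMem_map_stepMarks
  obtain ⟨hleft, h⟩ := append_cons_inj_of_notMem_left (hstar _) (hstar _) h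
  obtain ⟨hmiddle, hright⟩ := append_cons_inj_of_notMem_left (hstar _) (hstar _) h
  exact CutWord.ext (hinj hleft) (hinj hmiddle) (hinj hright)

theorem isMarkExcursion_starWord_iff (T : CutWord) :
    IsMarkExcursion (starWord T) ↔ IsMotzkinWord T.join := by
  have hballot (h : ℤ) (l : List (Option Bool)) :
      IsBallot (true, false) (false, true) h (l.map stepMarks) ↔
        IsBallot (some true) (some false) h l :=
    isBallot_map (u := some true) (d := some false) stepMarks_injective
  have hstar (h : ℤ) (V : List (Bool × Bool)) :
      IsBallot (true, false) (false, true) h ((true, true) :: V) ↔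
        0 ≤ h ∧ IsBallot (true, false) (false, true) h V := by
    simp [isBallot_cons]
  have hcount : (starWord T).count (false, true) = (starWord T).count (true, false) ↔
      T.join.count (some false) = T.join.count (some true) := by
    simp [starWord, CutWord.join, count_up_map_stepMarks, count_down_map_stepMarks]
  rw [isMotzkinWord_iff, IsMarkExcursion, IsExcursion, IsExcursion, hcount]
  simp only [starWord, CutWord.join, isBallot_append, hballot, hstar,
    count_up_map_stepMarks, count_down_map_stepMarks]
  refine and_congr_right fun _ => ⟨?_, ?_⟩
  · rintro ⟨hleft, -, hmiddle, -, hright⟩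
    exact ⟨hleft, hmiddle, hright⟩
  · rintro ⟨hleft, hmiddle, hright⟩
    exact ⟨hleft, hmiddle.nonneg, hmiddle, hright.nonneg, hright⟩

theorem countP_fst_starWord_eq {T : CutWord} (hT : IsMotzkinWord T.join) :
    (starWord T).countP Prod.fst = (starWord T).countP Prod.snd :=
  countP_fst_eq_countP_snd_iff.mpr ((isMarkExcursion_starWord_iff T).mpr hT).1

end CutWord

section Statistics

theorem add_le_choose {r s : ℕ} (hr : 0 < r) (hs : 0 < s) : r + s ≤ (r + s).choose r := by
  induction r, hr using Nat.le_induction with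
  | base => simp
  | succ r hr ih =>
    rw [Nat.add_right_comm, Nat.choose_succ_succ']
    have : 0 < (r + s).choose (r + 1) := Nat.choose_pos (by omega)
    omega

theorem choose_mul_choose_eq_four_iff {r s r' s' : ℕ} (hr : 0 < r) (hs : 0 < s) (hr' : 0 < r')
    (hs' : 0 < s') :
    (r + s).choose r * (r' + s').choose r' = 4 ↔ (r = 1 ∧ s = 1) ∧ r' = 1 ∧ s' = 1 := by
  have h := add_le_choose hr hs
  have h' := add_le_choose hr' hs'
  refine ⟨fun H => ?_, ?_⟩
  · have hle : (r + s) * (r' + s') ≤ 4 := H ▸ Nat.mul_le_mul h h'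
    have : r + s ≤ 2 := by nlinarith
    have : r' + s' ≤ 2 := by nlinarith
    omega
  · rintro ⟨⟨rfl, rfl⟩, rfl, rfl⟩
    rfl

theorem LStat_eq_four_iff {n k₁ k₂ : ℕ} {w : List Bool} (h : twoStars n w k₁ k₂) :
    LStat n w = 4 ↔
      (rStat w k₁ = 1 ∧ sStat w k₁ = 1) ∧ rStat w k₂ = 1 ∧ sStat w k₂ = 1 := by
  obtain ⟨h₁, h₂, hlt, ⟨hr₁, hs₁⟩, ⟨hr₂, hs₂⟩, honly⟩ := h
  have hone : ∀ i ∈ Finset.Icc 1 (n - 1), i ≠ k₁ ∧ i ≠ k₂ →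
      (rStat w i + sStat w i).choose (rStat w i) = 1 := by
    intro i hi hne
    rw [Nat.choose_eq_one_iff]
    have := mt (honly i hi) (not_or.mpr hne)
    omega
  rw [LStat, Finset.prod_eq_mul_of_mem k₁ k₂ h₁ h₂ hlt.ne hone,
    choose_mul_choose_eq_four_iff hr₁ hs₁ hr₂ hs₂]

theorem card_filter_Ico_eq_count {α : Type*} [BEq α] [LawfulBEq α] {P : ℕ → Prop}
    [DecidablePred P] {c : α} {V : List α} (hP : ∀ i (hi : i < V.length), P (i + 1) ↔ V[i] = c)
    {m : ℕ} (hm : m ≤ V.length) :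
    ((Finset.Ico 1 (m + 1)).filter P).card = (V.take m).count c := by
  induction m with
  | zero => simp
  | succ m ih =>
    rw [← Finset.insert_Ico_right_eq_Ico_add_one (by omega), Finset.filter_insert,
      List.take_succ_eq_append_getElem (by omega), List.count_append, ← ih (by omega)]
    by_cases h : V[m] = c
    · simp [(hP m (by omega)).mpr h, h]
    · simp [mt (hP m (by omega)).mp h, h]

variable {V : List (Bool × Bool)}

theorem xStat_pathOf (hV : V.countP Prod.fst = V.countP Prod.snd) {i : ℕ} (hi : i ≤ V.length) :
    xStat (pathOf V) (i + 1) = (V.take i).count (true, false) := by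
  refine card_filter_Ico_eq_count (fun i hi => ?_) hi
  rw [sStat_pathOf_pos_iff hV hi, ← Nat.le_zero, ← not_lt, rStat_pathOf_pos_iff hV hi]
  simp [Prod.ext_iff, and_comm]

theorem yStat_pathOf (hV : V.countP Prod.fst = V.countP Prod.snd) {i : ℕ} (hi : i ≤ V.length) :
    yStat (pathOf V) (i + 1) = (V.take i).count (false, true) := by
  refine card_filter_Ico_eq_count (fun i hi => ?_) hi
  rw [rStat_pathOf_pos_iff hV hi, ← Nat.le_zero, ← not_lt, sStat_pathOf_pos_iff hV hi]
  simp [Prod.ext_iff, and_comm]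

theorem twoStars_pathOf_succ_iff (hV : V.countP Prod.fst = V.countP Prod.snd) {i j : ℕ} :
    twoStars (V.length + 1) (pathOf V) (i + 1) (j + 1) ↔
      i < j ∧ ∀ m, V[m]? = some (true, true) ↔ m = i ∨ m = j := by
  have hstar (m : ℕ) : V[m]? = some (true, true) ↔ m + 1 ∈ Finset.Icc 1 V.length ∧
      0 < rStat (pathOf V) (m + 1) ∧ 0 < sStat (pathOf V) (m + 1) := by
    rw [List.getElem?_eq_some_iff, Finset.mem_Icc, and_iff_right (by omega : 1 ≤ m + 1),
      Nat.succ_le_iff, ← exists_prop]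
    refine exists_congr fun hm => ?_
    rw [rStat_pathOf_pos_iff hV hm, sStat_pathOf_pos_iff hV hm, Prod.ext_iff, and_comm]
  rw [twoStars, Nat.add_sub_cancel, Nat.add_lt_add_iff_right]
  refine ⟨fun ⟨hi, hj, hij, hi', hj', honly⟩ => ⟨hij, fun m => ⟨fun hm => ?_, ?_⟩⟩,
    fun ⟨hij, H⟩ => ?_⟩
  · obtain ⟨hm, hm'⟩ := (hstar m).mp hm
    simpa using honly _ hm hm'
  · rintro (rfl | rfl)
    exacts [(hstar _).mpr ⟨hi, hi'⟩, (hstar _).mpr ⟨hj, hj'⟩]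
  · obtain ⟨hi, hi'⟩ := (hstar i).mp ((H i).mpr (.inl rfl))
    obtain ⟨hj, hj'⟩ := (hstar j).mp ((H j).mpr (.inr rfl))
    refine ⟨hi, hj, hij, hi', hj', fun m hm hm' => ?_⟩
    obtain ⟨m, rfl⟩ := Nat.exists_eq_add_of_le' (Finset.mem_Icc.mp hm).1
    simpa using (H m).mp ((hstar m).mpr ⟨hm, hm'⟩)

theorem getElem?_starWord_eq_iff (T : CutWord) (m : ℕ) :
    (starWord T)[m]? = some (true, true) ↔
      m = T.left.length ∨ m = T.left.length + (T.middle.length + 1) := by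
  have hstar (l : List (Option Bool)) (k : ℕ) : (l.map stepMarks)[k]? ≠ some (true, true) :=
    fun h => star_notMem_map_stepMarks l (List.mem_of_getElem? h)
  simp only [starWord, List.getElem?_append, List.getElem?_cons, List.length_map]
  split_ifs <;> simp only [hstar, true_iff, false_iff] <;> omega

theorem exists_map_stepMarks_eq_drop_take {a b : ℕ}
    (h : ∀ m, a ≤ m → m < b → V[m]? ≠ some (true, true)) :
    ∃ l : List (Option Bool), l.map stepMarks = (V.take b).drop a := by
  refine exists_map_stepMarks_eq fun hmem => ?_
  obtain ⟨m, hm⟩ := List.mem_iff_getElem?.mp hmem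
  rw [List.getElem?_drop, List.getElem?_take] at hm
  split_ifs at hm with hlt
  exact h (a + m) (by omega) hlt hm

theorem exists_starWord_eq {i j : ℕ} (hij : i < j)
    (h : ∀ m, V[m]? = some (true, true) ↔ m = i ∨ m = j) :
    ∃ T, starWord T = V ∧ T.left.length = i ∧ T.left.length + (T.middle.length + 1) = j := by
  obtain ⟨hi, hVi⟩ := List.getElem?_eq_some_iff.mp ((h i).mpr (.inl rfl))
  obtain ⟨hj, hVj⟩ := List.getElem?_eq_some_iff.mp ((h j).mpr (.inr rfl))
  have hpiece {a b : ℕ} (hab : ∀ m, a ≤ m → m < b → m ≠ i ∧ m ≠ j) :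
      ∃ l : List (Option Bool), l.map stepMarks = (V.take b).drop a :=
    exists_map_stepMarks_eq_drop_take fun m ham hmb => by
      have := hab m ham hmb
      simp only [ne_eq, h m]
      omega
  obtain ⟨left, hleft⟩ := hpiece (a := 0) (b := i) (by omega)
  obtain ⟨middle, hmiddle⟩ := hpiece (a := i + 1) (b := j) (by omega)
  obtain ⟨right, hright⟩ := hpiece (a := j + 1) (b := V.length) (by omega)
  rw [List.drop_zero] at hleft
  rw [List.take_length] at hright
  refine ⟨⟨left, middle, right⟩, ?_, ?_, ?_⟩
  · calc
      starWord ⟨left, middle, right⟩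
      _ = V.take i ++ V[i] :: ((V.take j).drop (i + 1) ++ V[j] :: V.drop (j + 1)) := by
        rw [starWord, hleft, hmiddle, hright, hVi, hVj]
      _ = (V.take j).take i ++ ((V.take j)[i]'(by rw [List.length_take]; omega) ::
          (V.take j).drop (i + 1)) ++ V.drop j := by
        rw [List.take_take, min_eq_left hij.le, List.getElem_take, List.append_assoc,
          List.cons_append, ← List.drop_eq_getElem_cons]
      _ = V := by
        rw [← List.drop_eq_getElem_cons, List.take_append_drop, List.take_append_drop]
  · simpa [hi.le] using congrArg List.length hleft
  · have hl := congrArg List.length hleft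
    have hm := congrArg List.length hmiddle
    simp only [List.length_map, List.length_take, List.length_drop] at hl hm ⊢
    omega

theorem exists_twoStars_pathOf_iff (hV : V.countP Prod.fst = V.countP Prod.snd)
    {P : ℕ → ℕ → Prop} :
    (∃ k₁ k₂, twoStars (V.length + 1) (pathOf V) k₁ k₂ ∧ P k₁ k₂) ↔
      ∃ T, starWord T = V ∧
        P (T.left.length + 1) (T.left.length + (T.middle.length + 1) + 1) := by
  constructor
  · rintro ⟨k₁, k₂, hstars, hP⟩
    obtain ⟨i, rfl⟩ := Nat.exists_eq_add_of_le' (Finset.mem_Icc.mp hstars.1).1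
    obtain ⟨j, rfl⟩ := Nat.exists_eq_add_of_le' (Finset.mem_Icc.mp hstars.2.1).1
    obtain ⟨hij, h⟩ := (twoStars_pathOf_succ_iff hV).mp hstars
    obtain ⟨T, hT, rfl, rfl⟩ := exists_starWord_eq hij h
    exact ⟨T, hT, hP⟩
  · rintro ⟨T, rfl, hP⟩
    exact ⟨_, _, (twoStars_pathOf_succ_iff hV).mpr
      ⟨by omega, getElem?_starWord_eq_iff T⟩, hP⟩

end Statistics

section UnitSpacings

/-- The condition `L(D) = 4`, in terms of the cut word of the Dyck path `D`: `rᵢ = sᵢ = 1` at both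
distinguished indices. -/
def HasUnitSpacings (T : CutWord) : Prop :=
  (spacing Prod.fst T.y₁ (starWord T) = 1 ∧ spacing Prod.snd (T.x₁ + 1) (starWord T) = 1) ∧
    spacing Prod.fst (T.y₂ + 1) (starWord T) = 1 ∧ spacing Prod.snd (T.x₂ + 2) (starWord T) = 1

variable {T : CutWord}

theorem LStat_pathOf_starWord_eq_four_iff (hT : IsMotzkinWord T.join) :
    LStat ((starWord T).length + 1) (pathOf (starWord T)) = 4 ↔ HasUnitSpacings T := by
  have hV := countP_fst_starWord_eq hT
  have hstars := (twoStars_pathOf_succ_iff hV).mpr ⟨by omega, getElem?_starWord_eq_iff T⟩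
  have hlen : (starWord T).length = T.left.length + (T.middle.length + 1) + (T.right.length + 1) :=
    by simp only [starWord, List.length_append, List.length_map, List.length_cons]; omega
  have hleft : T.left.length < (starWord T).length := by omega
  have hmiddle : T.left.length + (T.middle.length + 1) < (starWord T).length := by omega
  have hstar₁ : (starWord T)[T.left.length] = (true, true) :=
    List.getElem_eq_iff _ |>.mpr ((getElem?_starWord_eq_iff T _).mpr (.inl rfl))
  have hstar₂ : (starWord T)[T.left.length + (T.middle.length + 1)] = (true, true) :=
    List.getElem_eq_iff _ |>.mpr ((getElem?_starWord_eq_iff T _).mpr (.inr rfl))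
  rw [LStat_eq_four_iff hstars, rStat_pathOf hV hleft, sStat_pathOf hV hleft,
    rStat_pathOf hV hmiddle, sStat_pathOf hV hmiddle, hstar₁, hstar₂, take_left_length_starWord,
    take_middle_length_starWord]
  simp only [if_true, List.countP_append, List.countP_cons, countP_fst_map_stepMarks,
    countP_snd_map_stepMarks, HasUnitSpacings, CutWord.x₁, CutWord.x₂, CutWord.y₁, CutWord.y₂,
    Nat.add_assoc]

theorem xStat_pathOf_starWord (hT : IsMotzkinWord T.join) :
    xStat (pathOf (starWord T)) (T.left.length + 1) = T.x₁ := by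
  rw [xStat_pathOf (countP_fst_starWord_eq hT) (by simp [starWord]), take_left_length_starWord,
    count_up_map_stepMarks, CutWord.x₁]

theorem yStat_pathOf_starWord (hT : IsMotzkinWord T.join) :
    yStat (pathOf (starWord T)) (T.left.length + (T.middle.length + 1) + 1) = T.y₂ := by
  rw [yStat_pathOf (countP_fst_starWord_eq hT) (by simp [starWord]), take_middle_length_starWord,
    List.count_append, List.count_cons_of_ne (by decide), count_down_map_stepMarks,
    count_down_map_stepMarks, CutWord.y₂, CutWord.y₁]

theorem CutWord.y₁_le_x₁ (hT : IsMotzkinWord T.join) : T.y₁ ≤ T.x₁ :=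
  hT.2 T.left (List.prefix_append _ _)

theorem CutWord.y₂_le_x₂ (hT : IsMotzkinWord T.join) : T.y₂ ≤ T.x₂ := by
  have := hT.2 (T.left ++ T.middle) (by simp [CutWord.join])
  simpa [CutWord.y₁, CutWord.x₁, CutWord.y₂, CutWord.x₂] using this

theorem spacing_fst_starWord_left {j : ℕ} (hj : j ≤ T.x₁) :
    spacing Prod.fst j (starWord T) = spacing (· == some true) j T.left := by
  rw [starWord, spacing_append_cons_of_le rfl (by rwa [countP_fst_map_stepMarks]),
    spacing_fst_map_stepMarks]

theorem spacing_fst_starWord_middle {j : ℕ} (hj : T.x₁ + j ≤ T.x₂) :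
    spacing Prod.fst (T.x₁ + 1 + j) (starWord T) = spacing (· == some true) j T.middle := by
  have hle : j ≤ (T.middle.map stepMarks).countP Prod.fst := by
    rw [countP_fst_map_stepMarks]
    exact Nat.add_le_add_iff_left.mp hj
  rw [starWord, CutWord.x₁, ← countP_fst_map_stepMarks, spacing_append_cons_add rfl,
    spacing_append_cons_of_le rfl hle, spacing_fst_map_stepMarks]

theorem spacing_snd_starWord_middle {j : ℕ} (hj : T.y₁ + j ≤ T.y₂) :
    spacing Prod.snd (T.y₁ + 1 + j) (starWord T) = spacing (· == some false) j T.middle := by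
  have hle : j ≤ (T.middle.map stepMarks).countP Prod.snd := by
    rw [countP_snd_map_stepMarks]
    exact Nat.add_le_add_iff_left.mp hj
  rw [starWord, CutWord.y₁, ← countP_snd_map_stepMarks, spacing_append_cons_add rfl,
    spacing_append_cons_of_le rfl hle, spacing_snd_map_stepMarks]

theorem spacing_snd_starWord_right (j : ℕ) :
    spacing Prod.snd (T.y₂ + 2 + j) (starWord T) = spacing (· == some false) j T.right := by
  have hcount : (T.left.map stepMarks).countP Prod.snd + 1 +
      ((T.middle.map stepMarks).countP Prod.snd + 1 + j) = T.y₂ + 2 + j := by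
    rw [countP_snd_map_stepMarks, countP_snd_map_stepMarks, CutWord.y₂, CutWord.y₁]
    omega
  rw [starWord, ← hcount, spacing_append_cons_add rfl, spacing_append_cons_add rfl,
    spacing_snd_map_stepMarks]

theorem hasUnitSpacings_iff_of_wide (h₁ : T.y₁ ≤ T.x₁) (h : T.y₂ + 2 ≤ T.x₁) :
    HasUnitSpacings T ↔
      (spacing (· == some true) T.y₁ T.left = 1 ∧
        spacing (· == some false) (T.x₁ - 1 - T.y₂) T.right = 1) ∧
      spacing (· == some true) (T.y₂ + 1) T.left = 1 ∧
        spacing (· == some false) (T.x₂ - T.y₂) T.right = 1 := by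
  rw [HasUnitSpacings, spacing_fst_starWord_left h₁, spacing_fst_starWord_left (by omega),
    ← spacing_snd_starWord_right, ← spacing_snd_starWord_right,
    show T.y₂ + 2 + (T.x₁ - 1 - T.y₂) = T.x₁ + 1 by omega,
    show T.y₂ + 2 + (T.x₂ - T.y₂) = T.x₂ + 2 by rw [CutWord.x₂]; omega]

theorem hasUnitSpacings_iff_of_narrow (h₁ : T.y₁ ≤ T.x₁) (h : T.x₁ < T.y₂) (h₂ : T.y₂ ≤ T.x₂) :
    HasUnitSpacings T ↔
      (spacing (· == some true) T.y₁ T.left = 1 ∧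
        spacing (· == some false) (T.x₁ - T.y₁) T.middle = 1) ∧
      spacing (· == some true) (T.y₂ - T.x₁) T.middle = 1 ∧
        spacing (· == some false) (T.x₂ - T.y₂) T.right = 1 := by
  rw [HasUnitSpacings, spacing_fst_starWord_left h₁, ← spacing_fst_starWord_middle (by omega),
    ← spacing_snd_starWord_middle (by omega), ← spacing_snd_starWord_right,
    show T.x₁ + 1 + (T.y₂ - T.x₁) = T.y₂ + 1 by omega,
    show T.y₁ + 1 + (T.x₁ - T.y₁) = T.x₁ + 1 by omega,
    show T.y₂ + 2 + (T.x₂ - T.y₂) = T.x₂ + 2 by omega]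

end UnitSpacings

section DoubleNth

variable {α : Type*} [BEq α] {c c' : α} {j k : ℕ} {l : List α}

/-- Doubles the `j`-th letter `c` of a list. In accordance with the conventions of `spacing`, a new
`c` is put at the front when `j = 0`, and at the end when the list has fewer than `j` letters `c`.
-/
def doubleNth (c : α) : ℕ → List α → List α
  | 0, l => c :: l
  | _ + 1, [] => [c]
  | j + 1, x :: l => x :: doubleNth c (if x == c then j else j + 1) l

theorem doubleNth_perm (c : α) (j : ℕ) (l : List α) : (doubleNth c j l).Perm (c :: l) := by
  induction l generalizing j with
  | nil => cases j <;> rfl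
  | cons x l ih =>
    cases j with
    | zero => rfl
    | succ j => exact ((ih _).cons x).trans (.swap c x l)

theorem length_doubleNth : (doubleNth c j l).length = l.length + 1 :=
  (doubleNth_perm c j l).length_eq

theorem doubleNth_injective (c : α) (j : ℕ) : (doubleNth c j).Injective := by
  intro l
  induction l generalizing j with
  | nil =>
    intro l' h
    have := congrArg List.length h
    rw [length_doubleNth, length_doubleNth] at this
    exact (List.length_eq_zero_iff.mp (Nat.succ_injective this.symm)).symm
  | cons x l ih =>
    intro l' h
    cases j with
    | zero => simpa only [doubleNth, List.cons.injEq, true_and] using h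
    | succ j =>
      cases l' with
      | nil => simpa [length_doubleNth] using congrArg List.length h
      | cons x' l' =>
        obtain ⟨rfl, h⟩ := List.cons.inj h
        rw [ih _ h]

variable [LawfulBEq α]

theorem count_doubleNth_self : (doubleNth c j l).count c = l.count c + 1 := by
  rw [(doubleNth_perm c j l).count_eq, List.count_cons_self]

theorem count_doubleNth_of_ne (hc : c ≠ c') : (doubleNth c j l).count c' = l.count c' := by
  rw [(doubleNth_perm c j l).count_eq, List.count_cons_of_ne hc]

theorem doubleNth_count_add_one (l : List α) : doubleNth c (l.count c + 1) l = l ++ [c] := by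
  induction l with
  | nil => rfl
  | cons x l ih => by_cases hx : x = c <;> simp [doubleNth, hx, ih]

theorem spacing_doubleNth_self (hj : j ≤ l.count c + 1) :
    spacing (· == c) j (doubleNth c j l) = 1 := by
  induction l generalizing j with
  | nil =>
    rw [List.count_nil] at hj
    interval_cases j <;> simp [doubleNth, spacing]
  | cons x l ih =>
    cases j with
    | zero => simp [doubleNth, spacing]
    | succ j =>
      by_cases hx : x = c <;> simp only [List.count_cons, beq_iff_eq, hx, if_true, if_false] at hj
        <;> simpa [doubleNth, spacing, hx] using ih (by omega)

theorem spacing_succ_doubleNth (hj : j ≤ k) :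
    spacing (· == c) (k + 1) (doubleNth c j l) = spacing (· == c) k l := by
  induction l generalizing j k with
  | nil => cases j <;> cases k <;> simp_all [doubleNth, spacing]
  | cons x l ih =>
    cases j with
    | zero => simp [doubleNth, spacing]
    | succ j =>
      obtain ⟨k, rfl⟩ := Nat.exists_eq_add_of_le' (Nat.zero_lt_of_lt hj)
      by_cases hx : x = c <;> simp only [doubleNth, spacing, beq_iff_eq, hx, if_true, if_false]
      exacts [ih (by omega), ih hj]

theorem spacing_doubleNth_eq_one_iff_of_ne (hc : c ≠ c') (hj : 0 < j) (hj' : j ≤ l.count c) :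
    spacing (· == c') k (doubleNth c j l) = 1 ↔ spacing (· == c') k l = 1 := by
  induction l generalizing j k with
  | nil => exact absurd (hj.trans_le hj') (lt_irrefl 0)
  | cons x l ih =>
    obtain ⟨j, rfl⟩ := Nat.exists_eq_add_of_le' hj
    have hpos (m : List α) : spacing (· == c') 0 m ≠ 0 :=
      (spacing_pos_iff.mpr (Nat.zero_le _)).ne'
    by_cases hx : x = c
    · rw [hx, List.count_cons_self] at hj'
      cases j with
      | zero => cases k <;> simp [doubleNth, spacing, hx, hc, hpos]
      | succ j =>
        have ih (k : ℕ) := ih (k := k) j.succ_pos (Nat.le_of_succ_le_succ hj')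
        cases k <;> simp [doubleNth, spacing, hx, hc, hpos, ih]
    · rw [List.count_cons_of_ne hx] at hj'
      have ih (k : ℕ) := ih (k := k) j.succ_pos hj'
      by_cases hx' : x = c'
      · cases k <;> simp [doubleNth, spacing, hx', hc.symm, ih]
      · cases k <;> simp [doubleNth, spacing, hx, hx', hpos, ih]

theorem exists_doubleNth_eq (hl : l ≠ []) (h : spacing (· == c) j l = 1) :
    ∃ m, doubleNth c j m = l := by
  induction l generalizing j with
  | nil => exact absurd rfl hl
  | cons x l ih =>
    cases j with
    | zero =>
      obtain rfl : x = c := by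
        have hpos : 0 < spacing (· == c) 0 l := spacing_pos_iff.mpr (Nat.zero_le _)
        by_contra hx
        simp [spacing, hx, hpos.ne'] at h
      exact ⟨l, by rw [doubleNth]⟩
    | succ j =>
      rw [spacing] at h
      rcases eq_or_ne l [] with rfl | hne
      · obtain ⟨rfl, rfl⟩ : j = 0 ∧ x = c := by
          cases j <;> by_cases hx : x = c <;> simp_all [spacing]
        exact ⟨[], rfl⟩
      · obtain ⟨m, rfl⟩ := ih hne h
        exact ⟨x :: m, rfl⟩

theorem exists_doubleNth_eq_of_pos (hj : 0 < j) (h : spacing (· == c) j l = 1) :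
    ∃ m, doubleNth c j m = l := by
  refine exists_doubleNth_eq ?_ h
  rintro rfl
  exact hj.not_ge (spacing_pos_iff.mp (h.symm ▸ Nat.one_pos))

theorem exists_doubleNth_doubleNth_eq (hl : 1 < l.length) (hjk : j ≤ k)
    (hj : spacing (· == c) j l = 1) (hk : spacing (· == c) (k + 1) l = 1) :
    ∃ m, doubleNth c j (doubleNth c k m) = l := by
  obtain ⟨l, rfl⟩ := exists_doubleNth_eq (List.ne_nil_of_length_pos (Nat.zero_lt_of_lt hl)) hj
  rw [length_doubleNth, Nat.lt_add_left_iff_pos] at hl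
  rw [spacing_succ_doubleNth hjk] at hk
  obtain ⟨l, rfl⟩ := exists_doubleNth_eq (List.ne_nil_of_length_pos hl) hk
  exact ⟨l, rfl⟩

section Ballot

variable {u d : α} {h : ℤ}

theorem isBallot_doubleNth_up_iff (hud : u ≠ d) (hl : (l.count d : ℤ) ≤ h + j) :
    IsBallot u d h (doubleNth u j l) ↔ IsBallot u d h l := by
  induction l generalizing j h with
  | nil =>
    have (hh : 0 ≤ h) : 0 ≤ h + 1 := by omega
    cases j <;> simpa [doubleNth, isBallot_cons_up hud, isBallot_nil] using this
  | cons x l ih =>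
    cases j with
    | zero =>
      rw [Nat.cast_zero, add_zero] at hl
      have hh : 0 ≤ h := (Nat.cast_nonneg _).trans hl
      have hsucc : IsBallot u d (h + 1) (x :: l) := isBallot_of_count_le (by omega)
      simp only [doubleNth, isBallot_cons_up hud, hh, hsucc, isBallot_of_count_le hl, true_and]
    | succ j =>
      rw [doubleNth, isBallot_cons, isBallot_cons, ih]
      rw [List.count_cons] at hl
      push_cast at hl
      split_ifs at hl ⊢ <;> push_cast <;> omega

theorem isBallot_doubleNth_down_iff (hud : u ≠ d) (hj : (j : ℤ) ≤ h + 1) :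
    IsBallot u d (h + 1) (doubleNth d j l) ↔ IsBallot u d h l := by
  induction l generalizing j h with
  | nil =>
    cases j <;> simp [doubleNth, isBallot_cons_down hud, isBallot_nil]
  | cons x l ih =>
    cases j with
    | zero => rw [doubleNth, isBallot_cons_down hud, add_sub_cancel_right]
    | succ j =>
      have hsucc : 0 ≤ h + 1 := (Nat.cast_nonneg _).trans hj
      have hh : 0 ≤ h := by omega
      rw [doubleNth, isBallot_cons, isBallot_cons, add_right_comm, add_sub_right_comm, ih,
        and_iff_right hsucc, and_iff_right hh]
      push_cast at hj
      split_ifs <;> push_cast <;> omega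

end Ballot

end DoubleNth

section Expand

namespace CutWord

/-- The bijection onto the cut words with unit spacings in the case `y₂ ≤ x₁`: the two doubled up
steps and the two doubled down steps create the unit spacings. -/
def expandWide (T : CutWord) : CutWord where
  left := doubleNth (some true) T.y₁ (doubleNth (some true) T.y₂ T.left)
  middle := T.middle
  right :=
    doubleNth (some false) (T.x₁ - T.y₂ + 1) (doubleNth (some false) (T.x₂ - T.y₂ + 1) T.right)

/-- The bijection onto the cut words with unit spacings in the case `x₁ < y₂`. -/
def expandNarrow (T : CutWord) : CutWord where
  left := doubleNth (some true) T.y₁ T.left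
  middle := doubleNth (some true) (T.y₂ - T.x₁) (doubleNth (some false) (T.x₁ - T.y₁ + 1) T.middle)
  right := doubleNth (some false) (T.x₂ - T.y₂ + 1) T.right

/-- The bijection from all cut Motzkin words onto those with unit spacings and
`x₁ ∉ {y₂, y₂ + 1}`. -/
def expand (T : CutWord) : CutWord := if T.y₂ ≤ T.x₁ then T.expandWide else T.expandNarrow

variable (T : CutWord)

theorem length_join_expand : T.expand.join.length = T.join.length + 4 := by
  rw [expand]
  split_ifs <;> simp only [join, expandWide, expandNarrow, List.length_append, length_doubleNth]
    <;> omega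

theorem x₁_expandWide : T.expandWide.x₁ = T.x₁ + 2 := by
  simp only [x₁, expandWide, count_doubleNth_self]

theorem y₁_expandWide : T.expandWide.y₁ = T.y₁ := by
  simp only [y₁, expandWide, count_doubleNth_of_ne (c := some true) (c' := some false) (by decide)]

theorem x₂_expandWide : T.expandWide.x₂ = T.x₂ + 2 := by
  rw [x₂, x₁_expandWide, expandWide, x₂, Nat.add_right_comm]

theorem y₂_expandWide : T.expandWide.y₂ = T.y₂ := by
  rw [y₂, y₁_expandWide, expandWide, y₂]

theorem x₁_expandNarrow : T.expandNarrow.x₁ = T.x₁ + 1 := by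
  rw [x₁, expandNarrow, count_doubleNth_self, x₁]

theorem y₁_expandNarrow : T.expandNarrow.y₁ = T.y₁ := by
  rw [y₁, expandNarrow, count_doubleNth_of_ne (by decide), y₁]

theorem x₂_expandNarrow : T.expandNarrow.x₂ = T.x₂ + 2 := by
  rw [x₂, x₁_expandNarrow, expandNarrow, count_doubleNth_self, count_doubleNth_of_ne (by decide),
    x₂, add_add_add_comm]

theorem y₂_expandNarrow : T.expandNarrow.y₂ = T.y₂ + 1 := by
  rw [y₂, y₁_expandNarrow, expandNarrow, count_doubleNth_of_ne (by decide), count_doubleNth_self,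
    y₂, Nat.add_assoc]

variable {T}

theorem isMotzkinWord_join_iff :
    IsMotzkinWord T.join ↔ T.y₂ + T.right.count (some false) = T.x₂ + T.right.count (some true) ∧
      IsBallot (some true) (some false) 0 T.left ∧
      IsBallot (some true) (some false) (T.x₁ - T.y₁ : ℤ) T.middle ∧
      IsBallot (some true) (some false) (T.x₂ - T.y₂ : ℤ) T.right := by
  have hheight : (0 : ℤ) + T.left.count (some true) - T.left.count (some false) +
      T.middle.count (some true) - T.middle.count (some false) = T.x₂ - T.y₂ := by
    rw [CutWord.x₂, CutWord.y₂, CutWord.x₁, CutWord.y₁]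
    push_cast
    ring
  rw [isMotzkinWord_iff, IsExcursion, CutWord.join, isBallot_append, isBallot_append, hheight,
    zero_add, List.count_append, List.count_append, List.count_append, List.count_append,
    ← Nat.add_assoc, ← Nat.add_assoc]
  rfl

theorem isMotzkinWord_join_expandWide_iff (h : T.y₂ ≤ T.x₁) :
    IsMotzkinWord T.expandWide.join ↔ IsMotzkinWord T.join := by
  have hle : T.y₁ ≤ T.y₂ := Nat.le_add_right _ _
  have hle' : T.x₁ ≤ T.x₂ := Nat.le_add_right _ _
  have hdiff : T.y₁ + T.middle.count (some false) = T.y₂ := rfl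
  have hupDown : some true ≠ some false := by decide
  rw [isMotzkinWord_join_iff, isMotzkinWord_join_iff, x₁_expandWide, x₂_expandWide, y₁_expandWide,
    y₂_expandWide]
  refine and_congr ?_ (and_congr ?_ (and_congr ?_ ?_))
  · rw [expandWide, count_doubleNth_self, count_doubleNth_self, count_doubleNth_of_ne hupDown.symm,
      count_doubleNth_of_ne hupDown.symm]
    omega
  · rw [expandWide, isBallot_doubleNth_up_iff hupDown, isBallot_doubleNth_up_iff hupDown]
    · rw [zero_add, Nat.cast_le]
      exact hle
    · rw [zero_add, Nat.cast_le, count_doubleNth_of_ne hupDown]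
      exact le_rfl
  · simp only [expandWide]
    exact iff_of_true (isBallot_of_count_le (by omega)) (isBallot_of_count_le (by omega))
  · have hheight : ((T.x₂ + 2 : ℕ) - T.y₂ : ℤ) = T.x₂ - T.y₂ + 1 + 1 := by
      push_cast
      ring
    rw [expandWide, hheight, isBallot_doubleNth_down_iff hupDown (by omega),
      isBallot_doubleNth_down_iff hupDown (by omega)]

theorem isMotzkinWord_join_expandNarrow_iff (h₁ : T.y₁ ≤ T.x₁) (h : T.x₁ < T.y₂)
    (h₂ : T.y₂ ≤ T.x₂) : IsMotzkinWord T.expandNarrow.join ↔ IsMotzkinWord T.join := by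
  have hdiff : T.y₁ + T.middle.count (some false) = T.y₂ := rfl
  have hupDown : some true ≠ some false := by decide
  rw [isMotzkinWord_join_iff, isMotzkinWord_join_iff, x₁_expandNarrow, x₂_expandNarrow,
    y₁_expandNarrow, y₂_expandNarrow]
  refine and_congr ?_ (and_congr ?_ (and_congr ?_ ?_))
  · rw [expandNarrow, count_doubleNth_self, count_doubleNth_of_ne hupDown.symm]
    omega
  · rw [expandNarrow, isBallot_doubleNth_up_iff hupDown]
    rw [zero_add, Nat.cast_le]
    exact le_rfl
  · have hheight : ((T.x₁ + 1 : ℕ) - T.y₁ : ℤ) = T.x₁ - T.y₁ + 1 := by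
      push_cast
      ring
    rw [expandNarrow, hheight, isBallot_doubleNth_up_iff hupDown,
      isBallot_doubleNth_down_iff hupDown (by omega)]
    rw [count_doubleNth_self]
    omega
  · have hheight : ((T.x₂ + 2 : ℕ) - (T.y₂ + 1 : ℕ) : ℤ) = T.x₂ - T.y₂ + 1 := by
      push_cast
      ring
    rw [expandNarrow, hheight, isBallot_doubleNth_down_iff hupDown (by omega)]

theorem hasUnitSpacings_expandWide (hT : IsMotzkinWord T.join) (h : T.y₂ ≤ T.x₁) :
    HasUnitSpacings T.expandWide := by
  have hle : T.y₁ ≤ T.y₂ := Nat.le_add_right _ _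
  have hle' : T.x₁ ≤ T.x₂ := Nat.le_add_right _ _
  have hleft : T.x₁ = T.left.count (some true) := rfl
  have hright := (isMotzkinWord_join_iff.mp hT).1
  rw [hasUnitSpacings_iff_of_wide (by rw [y₁_expandWide, x₁_expandWide]; omega)
    (by rw [y₂_expandWide, x₁_expandWide]; omega), x₁_expandWide, x₂_expandWide, y₁_expandWide,
    y₂_expandWide, show T.x₁ + 2 - 1 - T.y₂ = T.x₁ - T.y₂ + 1 by omega,
    show T.x₂ + 2 - T.y₂ = T.x₂ - T.y₂ + 1 + 1 by omega]
  refine ⟨⟨?_, ?_⟩, ?_, ?_⟩ <;> rw [expandWide]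
  · exact spacing_doubleNth_self (by rw [count_doubleNth_self]; omega)
  · exact spacing_doubleNth_self (by rw [count_doubleNth_self]; omega)
  · rw [spacing_succ_doubleNth hle]
    exact spacing_doubleNth_self (by omega)
  · rw [spacing_succ_doubleNth (by omega)]
    exact spacing_doubleNth_self (by omega)

theorem hasUnitSpacings_expandNarrow (hT : IsMotzkinWord T.join) (h : T.x₁ < T.y₂) :
    HasUnitSpacings T.expandNarrow := by
  have h₁ := y₁_le_x₁ hT
  have h₂ := y₂_le_x₂ hT
  have hleft : T.x₁ = T.left.count (some true) := rfl
  have hup : T.x₂ = T.x₁ + T.middle.count (some true) := rfl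
  have hdown : T.y₂ = T.y₁ + T.middle.count (some false) := rfl
  have hright := (isMotzkinWord_join_iff.mp hT).1
  have hcount : (doubleNth (some false) (T.x₁ - T.y₁ + 1) T.middle).count (some true) =
      T.middle.count (some true) := count_doubleNth_of_ne (by decide)
  rw [hasUnitSpacings_iff_of_narrow (by rw [y₁_expandNarrow, x₁_expandNarrow]; omega)
    (by rw [y₂_expandNarrow, x₁_expandNarrow]; omega)
    (by rw [y₂_expandNarrow, x₂_expandNarrow]; omega), x₁_expandNarrow, x₂_expandNarrow,
    y₁_expandNarrow, y₂_expandNarrow, show T.x₁ + 1 - T.y₁ = T.x₁ - T.y₁ + 1 by omega,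
    show T.y₂ + 1 - (T.x₁ + 1) = T.y₂ - T.x₁ by omega,
    show T.x₂ + 2 - (T.y₂ + 1) = T.x₂ - T.y₂ + 1 by omega]
  refine ⟨⟨?_, ?_⟩, ?_, ?_⟩ <;> rw [expandNarrow]
  · exact spacing_doubleNth_self (by omega)
  · rw [spacing_doubleNth_eq_one_iff_of_ne (by decide) (by omega) (by omega)]
    exact spacing_doubleNth_self (by omega)
  · exact spacing_doubleNth_self (by omega)
  · exact spacing_doubleNth_self (by omega)

theorem exists_expandWide_eq (hT : IsMotzkinWord T.join) (hunit : HasUnitSpacings T)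
    (h : T.y₂ + 2 ≤ T.x₁) :
    ∃ S : CutWord, S.y₂ ≤ S.x₁ ∧ IsMotzkinWord S.join ∧ S.expandWide = T := by
  have hle : T.y₁ ≤ T.y₂ := Nat.le_add_right _ _
  have hle' : T.x₁ ≤ T.x₂ := Nat.le_add_right _ _
  have hright := (isMotzkinWord_join_iff.mp hT).1
  have hlen : T.left.count (some true) ≤ T.left.length := List.count_le_length
  have hlen' : T.right.count (some false) ≤ T.right.length := List.count_le_length
  have hx₁ : T.x₁ = T.left.count (some true) := rfl
  obtain ⟨⟨hleft, hright₁⟩, hleft₂, hright₂⟩ := (hasUnitSpacings_iff_of_wide (by omega) h).mp hunit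
  obtain ⟨l, hl⟩ := exists_doubleNth_doubleNth_eq (by omega) hle hleft hleft₂
  obtain ⟨r, hr⟩ := exists_doubleNth_doubleNth_eq (k := T.x₂ - T.y₂ - 1) (by omega) (by omega)
    hright₁ (by rwa [Nat.sub_add_cancel (by omega)])
  let S : CutWord := ⟨l, T.middle, r⟩
  have hS : S.x₁ + 2 = T.x₁ := by
    rw [hx₁, ← hl, count_doubleNth_self, count_doubleNth_self]
    rfl
  have hSy : S.y₁ = T.y₁ := by
    rw [y₁, y₁, ← hl, count_doubleNth_of_ne (by decide), count_doubleNth_of_ne (by decide)]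
  have hSx₂ : S.x₂ + 2 = T.x₂ := by rw [x₂, x₂, ← hS, Nat.add_right_comm]
  have hSy₂ : S.y₂ = T.y₂ := by rw [y₂, y₂, hSy]
  have hST : S.expandWide = T := by
    rw [expandWide, hSy, hSy₂, show S.x₁ - T.y₂ + 1 = T.x₁ - 1 - T.y₂ by omega,
      show S.x₂ - T.y₂ + 1 = T.x₂ - T.y₂ - 1 by omega]
    exact CutWord.ext hl rfl hr
  exact ⟨S, by omega, (isMotzkinWord_join_expandWide_iff (by omega)).mp (hST ▸ hT), hST⟩

theorem y₁_lt_x₁_of_narrow (hT : IsMotzkinWord T.join) (h : T.x₁ < T.y₂)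
    (hdown : spacing (· == some false) (T.x₁ - T.y₁) T.middle = 1) : T.y₁ < T.x₁ := by
  refine (y₁_le_x₁ hT).lt_of_ne fun heq => ?_
  -- The first cut would be at height `0`, with a down step right after it.
  have hne : T.middle ≠ [] := by
    intro hnil
    rw [y₂, hnil, List.count_nil] at h
    omega
  rw [heq, Nat.sub_self] at hdown
  obtain ⟨m, hm⟩ := exists_doubleNth_eq hne hdown
  have hmiddle := (isMotzkinWord_join_iff.mp hT).2.2.1
  rw [← hm, doubleNth, isBallot_cons_down (by decide)] at hmiddle
  have := hmiddle.nonneg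
  omega

theorem y₂_lt_x₂_of_narrow (hT : IsMotzkinWord T.join) (h : T.x₁ < T.y₂)
    (hup : spacing (· == some true) (T.y₂ - T.x₁) T.middle = 1) : T.y₂ < T.x₂ := by
  refine (y₂_le_x₂ hT).lt_of_ne fun heq => ?_
  -- The second cut would be at height `0`, with an up step right before it.
  have hx₂ : T.x₁ + T.middle.count (some true) = T.x₂ := rfl
  have hy₂ : T.y₁ + T.middle.count (some false) = T.y₂ := rfl
  have hne : T.middle ≠ [] := by
    intro hnil
    rw [hnil, List.count_nil] at hx₂
    omega
  obtain ⟨m, hm⟩ := exists_doubleNth_eq hne hup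
  have hcount : T.y₂ - T.x₁ = m.count (some true) + 1 := by
    rw [← hm, count_doubleNth_self] at hx₂
    omega
  rw [hcount, doubleNth_count_add_one] at hm
  have hmiddle := (isMotzkinWord_join_iff.mp hT).2.2.1
  rw [← hm, isBallot_append] at hmiddle
  have := hmiddle.2.nonneg
  rw [← hm, List.count_append, List.count_singleton_self] at hx₂
  rw [← hm, List.count_append, List.count_cons_of_ne (by decide), List.count_nil] at hy₂
  omega

theorem exists_expandNarrow_eq (hT : IsMotzkinWord T.join) (hunit : HasUnitSpacings T)
    (h : T.x₁ < T.y₂) :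
    ∃ S : CutWord, S.x₁ < S.y₂ ∧ IsMotzkinWord S.join ∧ S.expandNarrow = T := by
  obtain ⟨⟨hleft, hmiddle₁⟩, hmiddle₂, hright⟩ :=
    (hasUnitSpacings_iff_of_narrow (y₁_le_x₁ hT) h (y₂_le_x₂ hT)).mp hunit
  have h₁ := y₁_lt_x₁_of_narrow hT h hmiddle₁
  have h₂ := y₂_lt_x₂_of_narrow hT h hmiddle₂
  have hne : T.left ≠ [] := by
    intro hnil
    rw [x₁, hnil, List.count_nil] at h₁
    omega
  obtain ⟨l, hl⟩ := exists_doubleNth_eq hne hleft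
  obtain ⟨m', hm'⟩ := exists_doubleNth_eq_of_pos (by omega) hmiddle₂
  have hcount : T.x₂ = T.x₁ + (m'.count (some true) + 1) := by
    rw [x₂, ← hm', count_doubleNth_self]
  rw [← hm', spacing_doubleNth_eq_one_iff_of_ne (by decide) (by omega) (by omega)] at hmiddle₁
  obtain ⟨m, rfl⟩ := exists_doubleNth_eq_of_pos (by omega) hmiddle₁
  obtain ⟨r, hr⟩ := exists_doubleNth_eq_of_pos (by omega) hright
  let S : CutWord := ⟨l, m, r⟩
  have hx₁ : S.x₁ + 1 = T.x₁ := by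
    rw [x₁, x₁, ← hl, count_doubleNth_self]
  have hy₁ : S.y₁ = T.y₁ := by
    rw [y₁, y₁, ← hl, count_doubleNth_of_ne (by decide)]
  have hx₂ : S.x₂ + 2 = T.x₂ := by
    rw [count_doubleNth_of_ne (by decide)] at hcount
    rw [hcount, x₂, ← hx₁]
    ring
  have hy₂ : S.y₂ + 1 = T.y₂ := by
    rw [y₂, y₂, hy₁, ← hm', count_doubleNth_of_ne (by decide), count_doubleNth_self, Nat.add_assoc]
  have hST : S.expandNarrow = T := by
    rw [expandNarrow, hy₁, show S.y₂ - S.x₁ = T.y₂ - T.x₁ by omega,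
      show S.x₁ - T.y₁ + 1 = T.x₁ - T.y₁ by omega, show S.x₂ - S.y₂ + 1 = T.x₂ - T.y₂ by omega]
    exact CutWord.ext hl hm' hr
  refine ⟨S, by omega, ?_, hST⟩
  rwa [← isMotzkinWord_join_expandNarrow_iff (by omega) (by omega) (by omega), hST]

theorem expandWide_injective : expandWide.Injective := by
  intro T T' h
  have hx₁ : T.x₁ = T'.x₁ := by simpa only [x₁_expandWide, Nat.add_left_inj] using congrArg x₁ h
  have hx₂ : T.x₂ = T'.x₂ := by simpa only [x₂_expandWide, Nat.add_left_inj] using congrArg x₂ h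
  have hy₁ : T.y₁ = T'.y₁ := by simpa only [y₁_expandWide] using congrArg y₁ h
  have hy₂ : T.y₂ = T'.y₂ := by simpa only [y₂_expandWide] using congrArg y₂ h
  simp only [expandWide, hx₁, hx₂, hy₁, hy₂, CutWord.mk.injEq,
    (doubleNth_injective _ _).eq_iff] at h
  exact CutWord.ext h.1 h.2.1 h.2.2

theorem expandNarrow_injective : expandNarrow.Injective := by
  intro T T' h
  have hx₁ : T.x₁ = T'.x₁ := by simpa only [x₁_expandNarrow, Nat.add_left_inj] using congrArg x₁ h
  have hx₂ : T.x₂ = T'.x₂ := by simpa only [x₂_expandNarrow, Nat.add_left_inj] using congrArg x₂ h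
  have hy₁ : T.y₁ = T'.y₁ := by simpa only [y₁_expandNarrow] using congrArg y₁ h
  have hy₂ : T.y₂ = T'.y₂ := by simpa only [y₂_expandNarrow, Nat.add_left_inj] using congrArg y₂ h
  simp only [expandNarrow, hx₁, hx₂, hy₁, hy₂, CutWord.mk.injEq, (doubleNth_injective _ _).eq_iff]
    at h
  exact CutWord.ext h.1 h.2.1 h.2.2

theorem expand_injective : expand.Injective := by
  have hdisjoint {T T' : CutWord} (hT : T.y₂ ≤ T.x₁) (hT' : ¬ T'.y₂ ≤ T'.x₁) :
      T.expandWide ≠ T'.expandNarrow := by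
    intro h
    have hx₁ := congrArg x₁ h
    have hy₂ := congrArg y₂ h
    rw [x₁_expandWide, x₁_expandNarrow] at hx₁
    rw [y₂_expandWide, y₂_expandNarrow] at hy₂
    omega
  intro T T' h
  rw [expand, expand] at h
  split_ifs at h with hT hT' hT'
  exacts [expandWide_injective h, (hdisjoint hT hT' h).elim, (hdisjoint hT' hT h.symm).elim,
    expandNarrow_injective h]

theorem image_expand :
    expand '' {T | IsMotzkinWord T.join} =
      {T | IsMotzkinWord T.join ∧ HasUnitSpacings T ∧ T.x₁ ≠ T.y₂ ∧ T.x₁ ≠ T.y₂ + 1} := by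
  ext T
  constructor
  · rintro ⟨T, hT : IsMotzkinWord T.join, rfl⟩
    rw [expand]
    split_ifs with h
    · refine ⟨(isMotzkinWord_join_expandWide_iff h).mpr hT, hasUnitSpacings_expandWide hT h, ?_⟩
      rw [x₁_expandWide, y₂_expandWide]
      omega
    · rw [not_le] at h
      refine ⟨(isMotzkinWord_join_expandNarrow_iff (y₁_le_x₁ hT) h (y₂_le_x₂ hT)).mpr hT,
        hasUnitSpacings_expandNarrow hT h, ?_⟩
      rw [x₁_expandNarrow, y₂_expandNarrow]
      omega
  · rintro ⟨hT, hunit, hne, hne'⟩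
    rcases lt_or_ge T.x₁ T.y₂ with h | h
    · obtain ⟨S, hlt, hS, rfl⟩ := exists_expandNarrow_eq hT hunit h
      exact ⟨S, hS, if_neg hlt.not_ge⟩
    · obtain ⟨S, hle, hS, rfl⟩ := exists_expandWide_eq hT hunit (by omega)
      exact ⟨S, hS, if_pos hle⟩

end CutWord

end Expand

section Counting

open CutWord

theorem ncard_setOf_fst_add_snd_le (n : ℕ) :
    {p : ℕ × ℕ | p.1 + p.2 ≤ n}.ncard = (n + 2).choose 2 := by
  have hset : {p : ℕ × ℕ | p.1 + p.2 ≤ n} =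
      (Finset.range (n + 1)).biUnion Finset.HasAntidiagonal.antidiagonal := by
    ext p
    simp
  rw [hset, Set.ncard_coe_finset, Finset.card_biUnion]
  · simpa using Nat.sum_range_add_choose n 1
  · refine fun i _ j _ hij => Finset.disjoint_left.mpr fun p hi hj => hij ?_
    rw [← Finset.HasAntidiagonal.mem_antidiagonal.mp hi,
      Finset.HasAntidiagonal.mem_antidiagonal.mp hj]

theorem ncard_setOf_join_mem {n : ℕ} {S : Set (List (Option Bool))}
    (hS : ∀ w ∈ S, w.length = n) :
    {T : CutWord | T.join ∈ S}.ncard = (n + 2).choose 2 * S.ncard := by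
  let cuts (T : CutWord) := ((T.left.length, T.middle.length), T.join)
  have hinj : cuts.Injective := by
    intro T T' h
    obtain ⟨hlen, hjoin : T.left ++ (T.middle ++ T.right) = _⟩ := Prod.mk.inj h
    obtain ⟨hleft, hmiddle⟩ := Prod.mk.inj hlen
    obtain ⟨hl, hjoin⟩ := List.append_inj hjoin hleft
    obtain ⟨hm, hr⟩ := List.append_inj hjoin hmiddle
    exact CutWord.ext hl hm hr
  have himage : cuts '' {T : CutWord | T.join ∈ S} = {p : ℕ × ℕ | p.1 + p.2 ≤ n} ×ˢ S := by
    ext ⟨⟨a, b⟩, w⟩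
    constructor
    · rintro ⟨T, hT, h⟩
      obtain ⟨hlen, rfl⟩ := Prod.mk.inj h
      obtain ⟨rfl, rfl⟩ := Prod.mk.inj hlen
      have hle : T.left.length + T.middle.length ≤ T.join.length := by
        rw [CutWord.join, List.length_append, List.length_append]
        omega
      exact ⟨hle.trans_eq (hS _ hT), hT⟩
    · rintro ⟨hab : a + b ≤ n, hw⟩
      have hjoin : w.take a ++ ((w.drop a).take b ++ (w.drop a).drop b) = w := by
        rw [List.take_append_drop, List.take_append_drop]
      have ha : (w.take a).length = a := by
        rw [List.length_take, hS w hw]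
        omega
      have hb : ((w.drop a).take b).length = b := by
        rw [List.length_take, List.length_drop, hS w hw]
        omega
      refine ⟨⟨w.take a, (w.drop a).take b, (w.drop a).drop b⟩, ?_, ?_⟩
      · rwa [Set.mem_ofPred_eq, CutWord.join, hjoin]
      · exact Prod.ext (Prod.ext ha hb) hjoin
  rw [← Set.ncard_image_of_injective _ hinj, himage, Set.ncard_prod, ncard_setOf_fst_add_snd_le]

theorem setOf_dyckWord_eq_image (n : ℕ) :
    {w | IsDyckWord (n + 3) w ∧ LStat (n + 3) w = 4 ∧ ∃ k₁ k₂, twoStars (n + 3) w k₁ k₂ ∧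
        xStat w k₁ ≠ yStat w k₂ ∧ xStat w k₁ ≠ yStat w k₂ + 1} =
      (fun T => pathOf (starWord T)) '' {T | T.join.length = n ∧ IsMotzkinWord T.join ∧
        HasUnitSpacings T ∧ T.x₁ ≠ T.y₂ ∧ T.x₁ ≠ T.y₂ + 1} := by
  ext w
  constructor
  · rintro ⟨hw, hL, hstars⟩
    obtain ⟨V, hlen, hV, rfl⟩ := exists_pathOf_eq hw
    have hcount := countP_fst_eq_countP_snd_iff.mpr hV.1
    rw [show n + 3 = V.length + 1 by rw [hlen]] at hL hstars
    obtain ⟨T, rfl, hne⟩ := (exists_twoStars_pathOf_iff hcount).mp hstars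
    have hT := (isMarkExcursion_starWord_iff T).mp hV
    rw [length_starWord, Nat.add_right_cancel_iff] at hlen
    rw [xStat_pathOf_starWord hT, yStat_pathOf_starWord hT] at hne
    exact ⟨T, ⟨hlen, hT, (LStat_pathOf_starWord_eq_four_iff hT).mp hL, hne⟩, rfl⟩
  · rintro ⟨T, ⟨rfl, hT, hunit, hne⟩, rfl⟩
    have hV := countP_fst_starWord_eq hT
    have hlen : (starWord T).length + 1 = T.join.length + 3 := by rw [length_starWord]
    rw [← hlen]
    refine ⟨(isDyckWord_pathOf_iff hV).mpr ((isMarkExcursion_starWord_iff T).mpr hT),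
      (LStat_pathOf_starWord_eq_four_iff hT).mpr hunit,
      (exists_twoStars_pathOf_iff hV).mpr ⟨T, rfl, ?_⟩⟩
    rwa [xStat_pathOf_starWord hT, yStat_pathOf_starWord hT]

theorem injOn_pathOf_starWord :
    Set.InjOn (fun T => pathOf (starWord T)) {T | IsMotzkinWord T.join} := fun _ hT _ hT' h =>
  starWord_injective (pathOf_inj (countP_fst_starWord_eq hT) (countP_fst_starWord_eq hT') h)

theorem image_expand_of_length (n : ℕ) :
    expand '' {T : CutWord | T.join ∈ {w | w.length = n ∧ IsMotzkinWord w}} =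
      {T : CutWord | T.join.length = n + 4 ∧ IsMotzkinWord T.join ∧
        HasUnitSpacings T ∧ T.x₁ ≠ T.y₂ ∧ T.x₁ ≠ T.y₂ + 1} := by
  ext T
  have h := Set.ext_iff.mp image_expand T
  constructor
  · rintro ⟨S, ⟨hlen, hS⟩, rfl⟩
    exact ⟨by rw [length_join_expand, hlen], h.mp ⟨S, hS, rfl⟩⟩
  · rintro ⟨hlen, hT⟩
    obtain ⟨S, hS, rfl⟩ := h.mpr hT
    rw [length_join_expand, Nat.add_right_cancel_iff] at hlen
    exact ⟨S, ⟨hlen, hS⟩, rfl⟩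

end Counting

/-- **Lemma.** For `n ≥ 7`, the number of Dyck paths `D ∈ 𝒟̂ₙ` with
`x₁(D) ∉ {y₂(D), y₂(D)+1}` is `C(n-5, 2)·M_{n-7}`. -/
theorem dyckHat_x1_notin_count (n : ℕ) (hn : 7 ≤ n) :
    {w | IsDyckWord n w ∧ LStat n w = 4 ∧ ∃ k₁ k₂, twoStars n w k₁ k₂ ∧
        xStat w k₁ ≠ yStat w k₂ ∧ xStat w k₁ ≠ yStat w k₂ + 1}.ncard =
      Nat.choose (n - 5) 2 * motzkin (n - 7) := by
  obtain ⟨n, rfl⟩ := Nat.exists_eq_add_of_le' hn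
  have hcut : Set.InjOn (fun T => pathOf (starWord T)) {T | T.join.length = n + 4 ∧
      IsMotzkinWord T.join ∧ HasUnitSpacings T ∧ T.x₁ ≠ T.y₂ ∧ T.x₁ ≠ T.y₂ + 1} :=
    injOn_pathOf_starWord.mono fun _ hT => hT.2.1
  rw [setOf_dyckWord_eq_image (n + 4), hcut.ncard_image, ← image_expand_of_length n,
    Set.ncard_image_of_injective _ CutWord.expand_injective, ncard_setOf_join_mem fun _ h => h.1]
  rfl
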